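/- arXiv:2411.00182 — 7 statements merged into one kernel-verified Lean document; each statement's English description precedes it below -/
import Mathlib

section
/- For all x ∈ X, γ ∈ Γ and v ∈ H, the family (π_x(c·(μ·c))(U_μ(π_{μ⁻¹x}(c)(U_{μ⁻¹γ} v))))_{μ∈Γ} has only finitely many nonzero terms and is summable with sum π_x(c)(U_γ v). Equivalently, (π⋊Γ)(e) ∘ φ = φ, where φ(ξ)(x,γ) = π_x(c)(U_γ(ξ(γ⁻¹x))): the map φ takes values in the range of the Mishchenko projection. -/
/-- A map on functions that is additive on compactly supported continuous functions is additive
on finite sums of such functions. -/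
lemma map_finset_sum_of_additive_on_compactly_supported
    {ι Z A : Type*} [TopologicalSpace Z] [AddCommGroup A] (p : (Z → ℂ) → A)
    (hp : ∀ f g : Z → ℂ, Continuous f → HasCompactSupport f →
      Continuous g → HasCompactSupport g → p (f + g) = p f + p g)
    (s : Finset ι) (f : ι → Z → ℂ) (hf : ∀ i, Continuous (f i))
    (hf' : ∀ i, HasCompactSupport (f i)) :
    p (∑ i ∈ s, f i) = ∑ i ∈ s, p (f i) := by
  classical
  have key : Continuous (∑ i ∈ s, f i) ∧ HasCompactSupport (∑ i ∈ s, f i) ∧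
      p (∑ i ∈ s, f i) = ∑ i ∈ s, p (f i) := by
    induction s using Finset.induction_on with
    | empty =>
      have h0 : Continuous (0 : Z → ℂ) := continuous_zero
      have h0' : HasCompactSupport (0 : Z → ℂ) := HasCompactSupport.zero
      have h := hp 0 0 h0 h0' h0 h0'
      rw [add_zero, left_eq_add] at h
      simpa using ⟨h0, h0', h⟩
    | insert a s ha ih =>
      obtain ⟨h1, h2, h3⟩ := ih
      rw [Finset.sum_insert ha, Finset.sum_insert ha, ← h3]
      exact ⟨(hf a).add h1, (hf' a).add h2, hp _ _ (hf a) (hf' a) h1 h2⟩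
  exact key.2.2

/-- For every `x ∈ X`, `γ ∈ Γ` and `v ∈ H`, the family
`(π_x(c·(μ·c))(U_μ(π_{μ⁻¹x}(c)(U_{μ⁻¹γ} v))))_μ` has finite support and is
summable with sum `π_x(c)(U_γ v)`; i.e. `(π⋊Γ)(e) ∘ φ = φ`: the map `φ` takes
values in the range of the Mishchenko projection. -/
theorem mishchenko_projection_fixes_phi
    {Γ : Type*} [Group Γ]
    {Z : Type*} [TopologicalSpace Z] [LocallyCompactSpace Z] [T2Space Z]
    {X : Type*} [TopologicalSpace X] [CompactSpace X] [T2Space X] [MulAction Γ X]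
    {H : Type*} [NormedAddCommGroup H] [InnerProductSpace ℂ H] [CompleteSpace H]
    (ρ : Z → Γ → Z)
    (hρ_one : ∀ z, ρ z 1 = z)
    (hρ_mul : ∀ (z : Z) (γ μ : Γ), ρ (ρ z γ) μ = ρ z (γ * μ))
    (hρ_cont : ∀ γ : Γ, Continuous fun z => ρ z γ)
    (hρ_proper : ∀ K L : Set Z, IsCompact K → IsCompact L →
      {γ : Γ | ∃ z ∈ K, ρ z γ ∈ L}.Finite)
    (hX_cont : ∀ γ : Γ, Continuous fun x : X => γ • x)
    (c : Z → ℝ) (hc_cont : Continuous c) (hc_supp : HasCompactSupport c)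
    (hc_mem : ∀ z, c z ∈ Set.Icc (0 : ℝ) 1)
    (hc_sum : ∀ z, HasSum (fun γ : Γ => c (ρ z γ) ^ 2) 1)
    (U : Γ →* (H ≃ₗᵢ[ℂ] H))
    (π : X → (Z → ℂ) → (H →L[ℂ] H))
    (hπ_add : ∀ (x : X) (f g : Z → ℂ), Continuous f → HasCompactSupport f →
      Continuous g → HasCompactSupport g → π x (f + g) = π x f + π x g)
    (hπ_mul : ∀ (x : X) (f g : Z → ℂ), Continuous f → HasCompactSupport f →
      Continuous g → HasCompactSupport g → π x (f * g) = (π x f).comp (π x g))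
    (hπ_star : ∀ (x : X) (f : Z → ℂ), Continuous f → HasCompactSupport f →
      π x (fun z => (starRingEnd ℂ) (f z)) = ContinuousLinearMap.adjoint (π x f))
    (hπ_equiv : ∀ (γ : Γ) (x : X) (f : Z → ℂ) (v : H),
      π (γ • x) f v = U γ (π x (fun z => f (ρ z γ⁻¹)) (U γ⁻¹ v))) :
    ∀ (x : X) (γ : Γ) (v : H),
      {μ : Γ | π x (fun z => (c z : ℂ) * (c (ρ z μ) : ℂ))
          (U μ (π (μ⁻¹ • x) (fun z => (c z : ℂ)) (U (μ⁻¹ * γ) v))) ≠ 0}.Finite ∧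
      HasSum (fun μ : Γ =>
          π x (fun z => (c z : ℂ) * (c (ρ z μ) : ℂ))
            (U μ (π (μ⁻¹ • x) (fun z => (c z : ℂ)) (U (μ⁻¹ * γ) v))))
        (π x (fun z => (c z : ℂ)) (U γ v)) := by
  intro x γ v
  have hc' : Continuous fun z => (c z : ℂ) := Complex.continuous_ofReal.comp hc_cont
  have hcs' : HasCompactSupport fun z => (c z : ℂ) :=
    hc_supp.comp_left (g := fun r : ℝ => (r : ℂ)) Complex.ofReal_zero
  have htr : ∀ μ, Continuous fun z => (c (ρ z μ) : ℂ) := fun μ => hc'.comp (hρ_cont μ)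
  have htrs : ∀ μ, HasCompactSupport fun z => (c (ρ z μ) : ℂ) := fun μ =>
    hcs'.comp_homeomorph
      { toFun := fun z => ρ z μ
        invFun := fun z => ρ z μ⁻¹
        left_inv := fun z => by simp [hρ_mul, hρ_one]
        right_inv := fun z => by simp [hρ_mul, hρ_one]
        continuous_toFun := hρ_cont μ
        continuous_invFun := hρ_cont μ⁻¹ }
  set F : Γ → Z → ℂ := fun μ =>
    (fun z => (c z : ℂ) * (c (ρ z μ) : ℂ)) * fun z => (c (ρ z μ) : ℂ) with hF
  have hFc : ∀ μ, Continuous (F μ) := fun μ => (hc'.mul (htr μ)).mul (htr μ)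
  have hFs : ∀ μ, HasCompactSupport (F μ) := fun μ => (htrs μ).mul_left
  have hterm : ∀ μ : Γ, π x (fun z => (c z : ℂ) * (c (ρ z μ) : ℂ))
      (U μ (π (μ⁻¹ • x) (fun z => (c z : ℂ)) (U (μ⁻¹ * γ) v))) = π x (F μ) (U γ v) := by
    intro μ
    have hU_mul : ∀ a b w, U (a * b) w = U a (U b w) := fun a b w => by rw [map_mul]; rfl
    have hU_inv : ∀ w, U μ (U μ⁻¹ w) = w := fun w => by
      rw [← hU_mul, mul_inv_cancel, map_one]; rfl
    rw [hπ_equiv, hU_inv, inv_inv, hU_mul, hU_inv]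
    exact (DFunLike.congr_fun
      (hπ_mul x _ _ (hc'.mul (htr μ)) hcs'.mul_right (htr μ) (htrs μ)) (U γ v)).symm
  simp only [hterm]
  have hfin := hρ_proper (tsupport c) (tsupport c) hc_supp hc_supp
  have hout : ∀ μ ∉ hfin.toFinset, ∀ z, c z ≠ 0 → c (ρ z μ) = 0 := by
    intro μ hμ z hz
    by_contra h
    exact hμ (hfin.mem_toFinset.2 ⟨z, subset_tsupport c hz, subset_tsupport c h⟩)
  have hzero : ∀ μ ∉ hfin.toFinset, π x (F μ) (U γ v) = 0 := by
    intro μ hμ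
    have hF0 : F μ = 0 := by
      funext z
      by_cases hz : c z = 0
      · simp [hF, hz]
      · simp [hF, hout μ hμ z hz]
    have h0 := map_finset_sum_of_additive_on_compactly_supported (π x) (hπ_add x) ∅ F hFc hFs
    rw [Finset.sum_empty, Finset.sum_empty] at h0
    rw [hF0, h0, zero_apply]
  have hsum : ∑ μ ∈ hfin.toFinset, F μ = fun z => (c z : ℂ) := by
    funext z
    by_cases hz : c z = 0
    · simp [hF, hz]
    · have h1 : ∑ μ ∈ hfin.toFinset, c (ρ z μ) ^ 2 = 1 :=
        (hasSum_sum_of_ne_finset_zero fun μ hμ => by simp [hout μ hμ z hz]).unique (hc_sum z)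
      have h2 : ∑ μ ∈ hfin.toFinset, (c (ρ z μ) : ℂ) ^ 2 = 1 := by exact_mod_cast h1
      simp only [Finset.sum_apply, hF, Pi.mul_apply, mul_assoc, ← pow_two, ← Finset.mul_sum, h2,
        mul_one]
  refine ⟨hfin.subset fun μ hμ => ?_, ?_⟩
  · by_contra h
    exact hμ (hzero μ fun h' => h (hfin.mem_toFinset.1 h'))
  · rw [← hsum, map_finset_sum_of_additive_on_compactly_supported (π x) (hπ_add x) _ F hFc hFs,
      sum_apply]
    exact hasSum_sum_of_ne_finset_zero hzero
end

section
/- Given η̂ ∈ C_c(X×Γ, H), define ξ : X → H by ξ(x) = ∑_{μ∈Γ} π_x(μ·c)(U_μ(η̂(μ⁻¹x, μ⁻¹))) (a finite sum). Then for every (x,γ) ∈ X×Γ one has π_x(c)(U_γ(ξ(γ⁻¹x))) = ∑_{μ∈Γ} π_x(c·(μ·c))(U_μ(η̂(μ⁻¹x, μ⁻¹γ))); that is, φ(ξ) = (π⋊Γ)(e)(η̂), where φ(ξ)(x,γ) = π_x(c)(U_γ(ξ(γ⁻¹x))). This proves surjectivity of φ onto the range of the Mishchenko projection at the level of compactly supported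 elements. -/
/-- Given `η̂ ∈ C_c(X×Γ, H)`, the element `ξ(x) = ∑_μ π_x(μ·c)(U_μ(η̂(μ⁻¹x, μ⁻¹)))`
satisfies `φ(ξ) = (π⋊Γ)(e)(η̂)`: for every `(x,γ)`,
`π_x(c)(U_γ(ξ(γ⁻¹x))) = ∑_μ π_x(c·(μ·c))(U_μ(η̂(μ⁻¹x, μ⁻¹γ)))`
(surjectivity of `φ` onto the range of the Mishchenko projection on compactly
supported elements). -/
theorem phi_surjective_onto_mishchenko_range
    {Γ : Type*} [Group Γ]
    {Z : Type*} [TopologicalSpace Z] [LocallyCompactSpace Z] [T2Space Z]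
    {X : Type*} [TopologicalSpace X] [CompactSpace X] [T2Space X] [MulAction Γ X]
    {H : Type*} [NormedAddCommGroup H] [InnerProductSpace ℂ H] [CompleteSpace H]
    (ρ : Z → Γ → Z)
    (hρ_one : ∀ z, ρ z 1 = z)
    (hρ_mul : ∀ (z : Z) (γ μ : Γ), ρ (ρ z γ) μ = ρ z (γ * μ))
    (hρ_cont : ∀ γ : Γ, Continuous fun z => ρ z γ)
    (hρ_proper : ∀ K L : Set Z, IsCompact K → IsCompact L →
      {γ : Γ | ∃ z ∈ K, ρ z γ ∈ L}.Finite)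
    (hX_cont : ∀ γ : Γ, Continuous fun x : X => γ • x)
    (c : Z → ℝ) (hc_cont : Continuous c) (hc_supp : HasCompactSupport c)
    (hc_mem : ∀ z, c z ∈ Set.Icc (0 : ℝ) 1)
    (hc_sum : ∀ z, HasSum (fun γ : Γ => c (ρ z γ) ^ 2) 1)
    (U : Γ →* (H ≃ₗᵢ[ℂ] H))
    (π : X → (Z → ℂ) → (H →L[ℂ] H))
    (hπ_add : ∀ (x : X) (f g : Z → ℂ), Continuous f → HasCompactSupport f →
      Continuous g → HasCompactSupport g → π x (f + g) = π x f + π x g)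
    (hπ_mul : ∀ (x : X) (f g : Z → ℂ), Continuous f → HasCompactSupport f →
      Continuous g → HasCompactSupport g → π x (f * g) = (π x f).comp (π x g))
    (hπ_star : ∀ (x : X) (f : Z → ℂ), Continuous f → HasCompactSupport f →
      π x (fun z => (starRingEnd ℂ) (f z)) = ContinuousLinearMap.adjoint (π x f))
    (hπ_equiv : ∀ (γ : Γ) (x : X) (f : Z → ℂ) (v : H),
      π (γ • x) f v = U γ (π x (fun z => f (ρ z γ⁻¹)) (U γ⁻¹ v)))
    (η : X → Γ → H) (F : Finset Γ)
    (hηF : ∀ (x : X) (γ : Γ), γ ∉ F → η x γ = 0)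
    (hη_cont : ∀ γ : Γ, Continuous fun x => η x γ)
    (ξ : X → H)
    (hξ : ∀ x : X,
      HasSum (fun μ : Γ =>
        π x (fun z => (c (ρ z μ) : ℂ)) (U μ (η (μ⁻¹ • x) μ⁻¹))) (ξ x)) :
    ∀ (x : X) (γ : Γ),
      HasSum (fun μ : Γ =>
          π x (fun z => (c z : ℂ) * (c (ρ z μ) : ℂ)) (U μ (η (μ⁻¹ • x) (μ⁻¹ * γ))))
        (π x (fun z => (c z : ℂ)) (U γ (ξ (γ⁻¹ • x)))) := by
  intro x γ
  have hsupp : ∀ μ : Γ, HasCompactSupport fun z => (c (ρ z μ) : ℂ) := fun μ =>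
    (hc_supp.comp_left Complex.ofReal_zero).comp_homeomorph
      { toFun := fun z => ρ z μ
        invFun := fun z => ρ z μ⁻¹
        left_inv := fun z => by simp [hρ_mul, hρ_one]
        right_inv := fun z => by simp [hρ_mul, hρ_one]
        continuous_toFun := hρ_cont μ
        continuous_invFun := hρ_cont μ⁻¹ }
  have hcont : ∀ μ : Γ, Continuous fun z => (c (ρ z μ) : ℂ) := fun μ =>
    Complex.continuous_ofReal.comp (hc_cont.comp (hρ_cont μ))
  have hintertwine : ∀ (f : Z → ℂ) (v : H),
      U γ (π (γ⁻¹ • x) f v) = π x (fun z => f (ρ z γ)) (U γ v) := by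
    intro f v
    have h := hπ_equiv γ (γ⁻¹ • x) (fun z => f (ρ z γ)) (U γ v)
    simpa [hρ_mul, hρ_one] using h.symm
  have hprod : ∀ μ : Γ, π x (fun z => (c z : ℂ) * (c (ρ z μ) : ℂ)) =
      (π x fun z => (c z : ℂ)).comp (π x fun z => (c (ρ z μ) : ℂ)) := fun μ =>
    hπ_mul x _ _ (Complex.continuous_ofReal.comp hc_cont)
      (hc_supp.comp_left Complex.ofReal_zero) (hcont μ) (hsupp μ)
  rw [← (Equiv.mulLeft γ).hasSum_iff]
  have h := (hξ (γ⁻¹ • x)).mapL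
    ((π x fun z => (c z : ℂ)).comp (U γ).toContinuousLinearEquiv.toContinuousLinearMap)
  convert h using 1
  · funext μ
    simp [hprod, hintertwine, hρ_mul, mul_smul]
  · rfl
end

section
/- For every Γ-invariant function ζ : X×Γ → H (i.e. ζ(γ₀x, γ₀γ) = U_{γ₀}(ζ(x,γ)) for all γ₀, γ, x), every x ∈ X and γ ∈ Γ, the family (π_x(μ·c)(U_μ(π_{μ⁻¹x}(c)(ζ(μ⁻¹x, μ⁻¹γ)))))_{μ∈Γ} is summable in H with sum ζ(x,γ). Equivalently, 𝒫 ∘ ((π(c))⋊Γ) is the identity on Γ-invariant functions, whence 𝒫 ∘ (π(c)⋊Γ) ∘ 𝒫 = 𝒫 on C_c(X×Γ, H), where (π(c)⋊Γ)(ζ)(x,γ) = π_x(c)(ζ(x,γ)). -/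
/-- The averaging map `𝒫`: `𝒫ξ̂(x,γ) = ∑_μ π_x(μ·c)(U_μ(ξ̂(μ⁻¹x, μ⁻¹γ)))`. -/
noncomputable def avgP {Γ X Z H : Type*} [Group Γ] [MulAction Γ X]
    [NormedAddCommGroup H] [InnerProductSpace ℂ H]
    (π : X → (Z → ℂ) → (H →L[ℂ] H)) (U : Γ →* (H ≃ₗᵢ[ℂ] H))
    (ρ : Z → Γ → Z) (c : Z → ℝ) (ξ : X → Γ → H) (x : X) (γ : Γ) : H :=
  ∑' μ : Γ, π x (fun z => (c (ρ z μ) : ℂ)) (U μ (ξ (μ⁻¹ • x) (μ⁻¹ * γ)))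

/-- The averaging map takes values in the `Γ`-invariant functions. -/
theorem avgP_smul_mul {Γ X Z H : Type*} [Group Γ] [MulAction Γ X]
    [NormedAddCommGroup H] [InnerProductSpace ℂ H]
    {π : X → (Z → ℂ) → (H →L[ℂ] H)} {U : Γ →* (H ≃ₗᵢ[ℂ] H)} {ρ : Z → Γ → Z}
    (hρ_mul : ∀ (z : Z) (γ μ : Γ), ρ (ρ z γ) μ = ρ z (γ * μ))
    (hπ_equiv : ∀ (γ : Γ) (x : X) (f : Z → ℂ) (v : H),
      π (γ • x) f v = U γ (π x (fun z => f (ρ z γ⁻¹)) (U γ⁻¹ v)))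
    (c : Z → ℝ) (ξ : X → Γ → H) (γ₀ : Γ) (x : X) (γ : Γ) :
    avgP π U ρ c ξ (γ₀ • x) (γ₀ * γ) = U γ₀ (avgP π U ρ c ξ x γ) := by
  unfold avgP
  rw [← (Equiv.mulLeft γ₀).tsum_eq]
  refine Eq.trans (tsum_congr fun ν => ?_) ((U γ₀).toContinuousLinearEquiv.map_tsum).symm
  simp [hπ_equiv, hρ_mul, mul_smul, mul_assoc]

/-- Equivariance moves `π(c)` past `U μ`, translating the cut-off function by `μ`. -/
theorem map_apply_inv_smul_eq_translate {Γ X Z H : Type*} [Group Γ] [MulAction Γ X]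
    [NormedAddCommGroup H] [InnerProductSpace ℂ H]
    {π : X → (Z → ℂ) → (H →L[ℂ] H)} {U : Γ →* (H ≃ₗᵢ[ℂ] H)} {ρ : Z → Γ → Z}
    (hρ_one : ∀ z, ρ z 1 = z)
    (hρ_mul : ∀ (z : Z) (γ μ : Γ), ρ (ρ z γ) μ = ρ z (γ * μ))
    (hπ_equiv : ∀ (γ : Γ) (x : X) (f : Z → ℂ) (v : H),
      π (γ • x) f v = U γ (π x (fun z => f (ρ z γ⁻¹)) (U γ⁻¹ v)))
    (f : Z → ℂ) (μ : Γ) (x : X) (v : H) :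
    U μ (π (μ⁻¹ • x) f v) = π x (fun z => f (ρ z μ)) (U μ v) := by
  have h := hπ_equiv μ (μ⁻¹ • x) (fun z => f (ρ z μ)) (U μ v)
  simpa [hρ_mul, hρ_one] using h.symm

/-- On `Γ`-invariant functions `ζ : X×Γ → H`, the family
`(π_x(μ·c)(U_μ(π_{μ⁻¹x}(c)(ζ(μ⁻¹x, μ⁻¹γ)))))_μ` is summable with sum `ζ(x,γ)`,
i.e. `𝒫 ∘ (π(c)⋊Γ)` is the identity on invariant functions; whence
`𝒫 ∘ (π(c)⋊Γ) ∘ 𝒫 = 𝒫` on `C_c(X×Γ, H)`. -/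
theorem avg_pi_c_identity_on_invariants
    {Γ : Type*} [Group Γ]
    {Z : Type*} [TopologicalSpace Z] [LocallyCompactSpace Z] [T2Space Z]
    {X : Type*} [TopologicalSpace X] [CompactSpace X] [T2Space X] [MulAction Γ X]
    {H : Type*} [NormedAddCommGroup H] [InnerProductSpace ℂ H] [CompleteSpace H]
    (ρ : Z → Γ → Z)
    (hρ_one : ∀ z, ρ z 1 = z)
    (hρ_mul : ∀ (z : Z) (γ μ : Γ), ρ (ρ z γ) μ = ρ z (γ * μ))
    (hρ_cont : ∀ γ : Γ, Continuous fun z => ρ z γ)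
    (hρ_proper : ∀ K L : Set Z, IsCompact K → IsCompact L →
      {γ : Γ | ∃ z ∈ K, ρ z γ ∈ L}.Finite)
    (hX_cont : ∀ γ : Γ, Continuous fun x : X => γ • x)
    (c : Z → ℝ) (hc_cont : Continuous c) (hc_supp : HasCompactSupport c)
    (hc_mem : ∀ z, c z ∈ Set.Icc (0 : ℝ) 1)
    (hc_sum : ∀ z, HasSum (fun γ : Γ => c (ρ z γ) ^ 2) 1)
    (U : Γ →* (H ≃ₗᵢ[ℂ] H))
    (π : X → (Z → ℂ) → (H →L[ℂ] H))
    (hπ_add : ∀ (x : X) (f g : Z → ℂ), Continuous f → HasCompactSupport f →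
      Continuous g → HasCompactSupport g → π x (f + g) = π x f + π x g)
    (hπ_mul : ∀ (x : X) (f g : Z → ℂ), Continuous f → HasCompactSupport f →
      Continuous g → HasCompactSupport g → π x (f * g) = (π x f).comp (π x g))
    (hπ_star : ∀ (x : X) (f : Z → ℂ), Continuous f → HasCompactSupport f →
      π x (fun z => (starRingEnd ℂ) (f z)) = ContinuousLinearMap.adjoint (π x f))
    (hπ_equiv : ∀ (γ : Γ) (x : X) (f : Z → ℂ) (v : H),
      π (γ • x) f v = U γ (π x (fun z => f (ρ z γ⁻¹)) (U γ⁻¹ v)))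
    (hπ_sum : ∀ (x : X) (v : H),
      HasSum (fun γ : Γ => π x (fun z => (c (ρ z γ) : ℂ) ^ 2) v) v) :
    (∀ ζ : X → Γ → H,
      (∀ (γ₀ : Γ) (x : X) (γ : Γ), ζ (γ₀ • x) (γ₀ * γ) = U γ₀ (ζ x γ)) →
      ∀ (x : X) (γ : Γ),
        HasSum (fun μ : Γ =>
            π x (fun z => (c (ρ z μ) : ℂ))
              (U μ (π (μ⁻¹ • x) (fun z => (c z : ℂ)) (ζ (μ⁻¹ • x) (μ⁻¹ * γ)))))
          (ζ x γ)) ∧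
    (∀ (ξ : X → Γ → H) (F : Finset Γ),
      (∀ (x : X) (γ : Γ), γ ∉ F → ξ x γ = 0) →
      (∀ γ : Γ, Continuous fun x => ξ x γ) →
      ∀ (x : X) (γ : Γ),
        avgP π U ρ c
          (fun x' γ' => π x' (fun z => (c z : ℂ)) (avgP π U ρ c ξ x' γ')) x γ =
        avgP π U ρ c ξ x γ) := by
  have invariant_sum (ζ : X → Γ → H)
      (hζ : ∀ (γ₀ : Γ) (x : X) (γ : Γ), ζ (γ₀ • x) (γ₀ * γ) = U γ₀ (ζ x γ)) (x : X) (γ : Γ) :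
      HasSum (fun μ : Γ =>
          π x (fun z => (c (ρ z μ) : ℂ))
            (U μ (π (μ⁻¹ • x) (fun z => (c z : ℂ)) (ζ (μ⁻¹ • x) (μ⁻¹ * γ)))))
        (ζ x γ) := by
    convert hπ_sum x (ζ x γ) using 2 with μ
    have hcont : Continuous fun z => (c (ρ z μ) : ℂ) :=
      Complex.continuous_ofReal.comp (hc_cont.comp (hρ_cont μ))
    let e : Z ≃ₜ Z :=
      { toFun := fun z => ρ z μ
        invFun := fun z => ρ z μ⁻¹
        left_inv := fun z => by simp [hρ_mul, hρ_one]
        right_inv := fun z => by simp [hρ_mul, hρ_one]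
        continuous_toFun := hρ_cont μ
        continuous_invFun := hρ_cont μ⁻¹ }
    have hsupp : HasCompactSupport fun z => (c (ρ z μ) : ℂ) :=
      (hc_supp.comp_homeomorph e).comp_left Complex.ofReal_zero
    have hsq : (fun z => (c (ρ z μ) : ℂ) ^ 2) =
        (fun z => (c (ρ z μ) : ℂ)) * fun z => (c (ρ z μ) : ℂ) := by
      ext z; simp [sq]
    rw [map_apply_inv_smul_eq_translate hρ_one hρ_mul hπ_equiv, ← hζ μ, smul_inv_smul,
      mul_inv_cancel_left, hsq, hπ_mul x _ _ hcont hsupp hcont hsupp,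
      ContinuousLinearMap.comp_apply]
  refine ⟨invariant_sum, fun ξ F _ _ x γ => ?_⟩
  exact (invariant_sum (avgP π U ρ c ξ) (avgP_smul_mul hρ_mul hπ_equiv c ξ) x γ).tsum_eq
end

section
/- For every Γ-invariant function ζ : X×Γ → H (i.e. ζ(γ₀x, γ₀γ) = U_{γ₀}(ζ(x,γ))), every x ∈ X and γ ∈ Γ, the family (π'_x(μ·c)(U'_μ(π'_{μ⁻¹x}(c)(V_{μ⁻¹x}(ζ(μ⁻¹x, μ⁻¹γ))))))_{μ∈Γ} is summable in H' with sum V_x(ζ(x,γ)). Equivalently, 𝒫' ∘ ((π'(c)∘V)⋊Γ) = V⋊Γ on Γ-invariant functions, whence 𝒫' ∘ ((π'(c)V)⋊Γ) ∘ 𝒫 = (V⋊Γ) ∘ 𝒫 (the key relation in the construction of the unitary W between Connes–Skandalis modules for two equivariant representations). -/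
/-- Translating a compactly supported function by a continuous right action preserves
compactness of the support. -/
theorem HasCompactSupport.comp_rightAction {Γ Z E : Type*} [Group Γ] [TopologicalSpace Z] [Zero E]
    {ρ : Z → Γ → Z} (hρ_one : ∀ z, ρ z 1 = z)
    (hρ_mul : ∀ (z : Z) (γ μ : Γ), ρ (ρ z γ) μ = ρ z (γ * μ))
    (hρ_cont : ∀ γ : Γ, Continuous fun z => ρ z γ)
    {f : Z → E} (hf : HasCompactSupport f) (γ : Γ) :
    HasCompactSupport fun z => f (ρ z γ) :=
  hf.comp_homeomorph
    { toFun := fun z => ρ z γ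
      invFun := fun z => ρ z γ⁻¹
      left_inv := fun z => by simp [hρ_mul, hρ_one]
      right_inv := fun z => by simp [hρ_mul, hρ_one]
      continuous_toFun := hρ_cont γ
      continuous_invFun := hρ_cont γ⁻¹ }

/-- For a `Γ`-equivariant family `V = (V_x)` of bounded operators `H → H'`, on
`Γ`-invariant functions `ζ` the family
`(π'_x(μ·c)(U'_μ(π'_{μ⁻¹x}(c)(V_{μ⁻¹x}(ζ(μ⁻¹x, μ⁻¹γ))))))_μ` is summable with
sum `V_x(ζ(x,γ))`; whence `𝒫' ∘ ((π'(c)V)⋊Γ) ∘ 𝒫 = (V⋊Γ) ∘ 𝒫`. -/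
theorem avg_intertwines_equivariant_family
    {Γ : Type*} [Group Γ]
    {Z : Type*} [TopologicalSpace Z] [LocallyCompactSpace Z] [T2Space Z]
    {X : Type*} [TopologicalSpace X] [CompactSpace X] [T2Space X] [MulAction Γ X]
    {H : Type*} [NormedAddCommGroup H] [InnerProductSpace ℂ H] [CompleteSpace H]
    {H' : Type*} [NormedAddCommGroup H'] [InnerProductSpace ℂ H'] [CompleteSpace H']
    (ρ : Z → Γ → Z)
    (hρ_one : ∀ z, ρ z 1 = z)
    (hρ_mul : ∀ (z : Z) (γ μ : Γ), ρ (ρ z γ) μ = ρ z (γ * μ))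
    (hρ_cont : ∀ γ : Γ, Continuous fun z => ρ z γ)
    (hρ_proper : ∀ K L : Set Z, IsCompact K → IsCompact L →
      {γ : Γ | ∃ z ∈ K, ρ z γ ∈ L}.Finite)
    (hX_cont : ∀ γ : Γ, Continuous fun x : X => γ • x)
    (c : Z → ℝ) (hc_cont : Continuous c) (hc_supp : HasCompactSupport c)
    (hc_mem : ∀ z, c z ∈ Set.Icc (0 : ℝ) 1)
    (hc_sum : ∀ z, HasSum (fun γ : Γ => c (ρ z γ) ^ 2) 1)
    (U : Γ →* (H ≃ₗᵢ[ℂ] H))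
    (π : X → (Z → ℂ) → (H →L[ℂ] H))
    (hπ_equiv : ∀ (γ : Γ) (x : X) (f : Z → ℂ) (v : H),
      π (γ • x) f v = U γ (π x (fun z => f (ρ z γ⁻¹)) (U γ⁻¹ v)))
    (U' : Γ →* (H' ≃ₗᵢ[ℂ] H'))
    (π' : X → (Z → ℂ) → (H' →L[ℂ] H'))
    (hπ'_add : ∀ (x : X) (f g : Z → ℂ), Continuous f → HasCompactSupport f →
      Continuous g → HasCompactSupport g → π' x (f + g) = π' x f + π' x g)
    (hπ'_mul : ∀ (x : X) (f g : Z → ℂ), Continuous f → HasCompactSupport f →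
      Continuous g → HasCompactSupport g → π' x (f * g) = (π' x f).comp (π' x g))
    (hπ'_star : ∀ (x : X) (f : Z → ℂ), Continuous f → HasCompactSupport f →
      π' x (fun z => (starRingEnd ℂ) (f z)) = ContinuousLinearMap.adjoint (π' x f))
    (hπ'_equiv : ∀ (γ : Γ) (x : X) (f : Z → ℂ) (w : H'),
      π' (γ • x) f w = U' γ (π' x (fun z => f (ρ z γ⁻¹)) (U' γ⁻¹ w)))
    (hπ'_sum : ∀ (x : X) (w : H'),
      HasSum (fun γ : Γ => π' x (fun z => (c (ρ z γ) : ℂ) ^ 2) w) w)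
    (V : X → (H →L[ℂ] H'))
    (hV_equiv : ∀ (γ : Γ) (x : X) (v : H),
      V (γ • x) v = U' γ (V x (U γ⁻¹ v))) :
    (∀ ζ : X → Γ → H,
      (∀ (γ₀ : Γ) (x : X) (γ : Γ), ζ (γ₀ • x) (γ₀ * γ) = U γ₀ (ζ x γ)) →
      ∀ (x : X) (γ : Γ),
        HasSum (fun μ : Γ =>
            π' x (fun z => (c (ρ z μ) : ℂ))
              (U' μ (π' (μ⁻¹ • x) (fun z => (c z : ℂ))
                (V (μ⁻¹ • x) (ζ (μ⁻¹ • x) (μ⁻¹ * γ))))))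
          (V x (ζ x γ))) ∧
    (∀ (ξ : X → Γ → H) (F : Finset Γ),
      (∀ (x : X) (γ : Γ), γ ∉ F → ξ x γ = 0) →
      (∀ γ : Γ, Continuous fun x => ξ x γ) →
      ∀ (x : X) (γ : Γ),
        avgP π' U' ρ c
          (fun x' γ' => π' x' (fun z => (c z : ℂ)) (V x' (avgP π U ρ c ξ x' γ'))) x γ =
        V x (avgP π U ρ c ξ x γ)) := by
  have sum_invariant : ∀ ζ : X → Γ → H,
      (∀ (γ₀ : Γ) (x : X) (γ : Γ), ζ (γ₀ • x) (γ₀ * γ) = U γ₀ (ζ x γ)) →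
      ∀ (x : X) (γ : Γ),
        HasSum (fun μ : Γ =>
            π' x (fun z => (c (ρ z μ) : ℂ))
              (U' μ (π' (μ⁻¹ • x) (fun z => (c z : ℂ))
                (V (μ⁻¹ • x) (ζ (μ⁻¹ • x) (μ⁻¹ * γ))))))
          (V x (ζ x γ)) := by
    intro ζ hζ x γ
    convert hπ'_sum x (V x (ζ x γ)) using 2 with μ
    have hcont : Continuous fun z => (c (ρ z μ) : ℂ) :=
      Complex.continuous_ofReal.comp (hc_cont.comp (hρ_cont μ))
    have hsupp : HasCompactSupport fun z => (c (ρ z μ) : ℂ) :=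
      (hc_supp.comp_rightAction hρ_one hρ_mul hρ_cont μ).comp_left Complex.ofReal_zero
    have hsq : (fun z => (c (ρ z μ) : ℂ) ^ 2) =
        (fun z => (c (ρ z μ) : ℂ)) * fun z => (c (ρ z μ) : ℂ) :=
      funext fun z => sq _
    rw [hsq, hπ'_mul x _ _ hcont hsupp hcont hsupp, hζ, hV_equiv, hπ'_equiv]
    simp
  exact ⟨sum_invariant, fun ξ _ _ _ x γ =>
    (sum_invariant _ (avgP_smul_mul hρ_mul hπ_equiv c ξ) x γ).tsum_eq⟩
end

section
/- Define W₀ : C_c(X×Γ, H) → (functions X×Γ → H') by W₀ξ̂(x,γ) = π'_x(c)(V_x(𝒫ξ̂(x,γ))). Then for every ξ̂ ∈ C_c(X×Γ, H), x ∈ X and γ ∈ Γ, the family (π_x(c)(V_x*(π'_x(μ·c)(U'_μ(π'_{μ⁻¹x}(c)(V_{μ⁻¹x}(𝒫ξ̂(μ⁻¹x, μ⁻¹γ))))))))_{μ∈Γ} is summable in H with sum ((π⋊Γ)(e)ξ̂)(x,γ) = ∑_{ν∈Γ} π_x(c·(ν·c))(U_ν(ξ̂(ν⁻¹x, ν⁻¹γ))).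 In operator form, W₀* ∘ W₀ = (π⋊Γ)(e) on C_c(X×Γ, H), where W₀* = ((π(c)V*)⋊Γ) ∘ 𝒫' (the computation showing that W is a unitary from the Connes–Skandalis module 𝓔_Z^H onto 𝓔_Z^{H'}). -/
/-- The Mishchenko projection acting on `C_c(X×Γ, H)`:
`((π⋊Γ)(e)ξ̂)(x,γ) = ∑_μ π_x(c·(μ·c))(U_μ(ξ̂(μ⁻¹x, μ⁻¹γ)))`. -/
noncomputable def mishAct {Γ X Z H : Type*} [Group Γ] [MulAction Γ X]
    [NormedAddCommGroup H] [InnerProductSpace ℂ H]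
    (π : X → (Z → ℂ) → (H →L[ℂ] H)) (U : Γ →* (H ≃ₗᵢ[ℂ] H))
    (ρ : Z → Γ → Z) (c : Z → ℝ) (ξ : X → Γ → H) (x : X) (γ : Γ) : H :=
  ∑' μ : Γ, π x (fun z => (c z : ℂ) * (c (ρ z μ) : ℂ)) (U μ (ξ (μ⁻¹ • x) (μ⁻¹ * γ)))

/-- The averaging map intertwines the translation of `X × Γ` with `U`. -/
theorem avgP_inv_smul {Γ X Z H : Type*} [Group Γ] [MulAction Γ X]
    [NormedAddCommGroup H] [InnerProductSpace ℂ H]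
    (ρ : Z → Γ → Z) (hρ_mul : ∀ (z : Z) (γ μ : Γ), ρ (ρ z γ) μ = ρ z (γ * μ))
    (U : Γ →* (H ≃ₗᵢ[ℂ] H)) (π : X → (Z → ℂ) → (H →L[ℂ] H))
    (hπ_equiv : ∀ (γ : Γ) (x : X) (f : Z → ℂ) (v : H),
      π (γ • x) f v = U γ (π x (fun z => f (ρ z γ⁻¹)) (U γ⁻¹ v)))
    (c : Z → ℝ) (ξ : X → Γ → H) (x : X) (γ μ : Γ) :
    avgP π U ρ c ξ (μ⁻¹ • x) (μ⁻¹ * γ) = U μ⁻¹ (avgP π U ρ c ξ x γ) := by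
  unfold avgP
  rw [← (Equiv.mulLeft μ⁻¹).tsum_eq]
  refine Eq.trans ?_ (U μ⁻¹).toContinuousLinearEquiv.map_tsum.symm
  refine tsum_congr fun ν => ?_
  rw [LinearIsometryEquiv.coe_toContinuousLinearEquiv]
  simp [hπ_equiv, hρ_mul, mul_smul, mul_assoc]

/-- A right translate of a compactly supported function is compactly supported. -/
theorem HasCompactSupport.comp_rightTranslate {Γ Z E : Type*} [Group Γ] [TopologicalSpace Z]
    [Zero E] {ρ : Z → Γ → Z} (hρ_one : ∀ z, ρ z 1 = z)
    (hρ_mul : ∀ (z : Z) (γ μ : Γ), ρ (ρ z γ) μ = ρ z (γ * μ))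
    (hρ_cont : ∀ γ : Γ, Continuous fun z => ρ z γ) {f : Z → E} (hf : HasCompactSupport f)
    (μ : Γ) : HasCompactSupport fun z => f (ρ z μ) := by
  let e : Z ≃ₜ Z :=
    { toFun := fun z => ρ z μ
      invFun := fun z => ρ z μ⁻¹
      left_inv := fun z => by simp [hρ_mul, hρ_one]
      right_inv := fun z => by simp [hρ_mul, hρ_one]
      continuous_toFun := hρ_cont μ
      continuous_invFun := hρ_cont μ⁻¹ }
  exact hf.comp_homeomorph e

/-- With `W₀ξ̂(x,γ) = π'_x(c)(V_x(𝒫ξ̂(x,γ)))` built from a `Γ`-equivariant family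
of unitaries `V_x : H → H'`, one has `W₀* ∘ W₀ = (π⋊Γ)(e)` on `C_c(X×Γ, H)`:
the family `(π_x(c)(V_x*(π'_x(μ·c)(U'_μ(π'_{μ⁻¹x}(c)(V_{μ⁻¹x}(𝒫ξ̂(μ⁻¹x,μ⁻¹γ)))))))_μ`
is summable with sum `((π⋊Γ)(e)ξ̂)(x,γ)`. -/
theorem W0_star_W0_eq_mishchenko
    {Γ : Type*} [Group Γ]
    {Z : Type*} [TopologicalSpace Z] [LocallyCompactSpace Z] [T2Space Z]
    {X : Type*} [TopologicalSpace X] [CompactSpace X] [T2Space X] [MulAction Γ X]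
    {H : Type*} [NormedAddCommGroup H] [InnerProductSpace ℂ H] [CompleteSpace H]
    {H' : Type*} [NormedAddCommGroup H'] [InnerProductSpace ℂ H'] [CompleteSpace H']
    (ρ : Z → Γ → Z)
    (hρ_one : ∀ z, ρ z 1 = z)
    (hρ_mul : ∀ (z : Z) (γ μ : Γ), ρ (ρ z γ) μ = ρ z (γ * μ))
    (hρ_cont : ∀ γ : Γ, Continuous fun z => ρ z γ)
    (hρ_proper : ∀ K L : Set Z, IsCompact K → IsCompact L →
      {γ : Γ | ∃ z ∈ K, ρ z γ ∈ L}.Finite)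
    (hX_cont : ∀ γ : Γ, Continuous fun x : X => γ • x)
    (c : Z → ℝ) (hc_cont : Continuous c) (hc_supp : HasCompactSupport c)
    (hc_mem : ∀ z, c z ∈ Set.Icc (0 : ℝ) 1)
    (hc_sum : ∀ z, HasSum (fun γ : Γ => c (ρ z γ) ^ 2) 1)
    (U : Γ →* (H ≃ₗᵢ[ℂ] H))
    (π : X → (Z → ℂ) → (H →L[ℂ] H))
    (hπ_add : ∀ (x : X) (f g : Z → ℂ), Continuous f → HasCompactSupport f →
      Continuous g → HasCompactSupport g → π x (f + g) = π x f + π x g)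
    (hπ_mul : ∀ (x : X) (f g : Z → ℂ), Continuous f → HasCompactSupport f →
      Continuous g → HasCompactSupport g → π x (f * g) = (π x f).comp (π x g))
    (hπ_star : ∀ (x : X) (f : Z → ℂ), Continuous f → HasCompactSupport f →
      π x (fun z => (starRingEnd ℂ) (f z)) = ContinuousLinearMap.adjoint (π x f))
    (hπ_equiv : ∀ (γ : Γ) (x : X) (f : Z → ℂ) (v : H),
      π (γ • x) f v = U γ (π x (fun z => f (ρ z γ⁻¹)) (U γ⁻¹ v)))
    (U' : Γ →* (H' ≃ₗᵢ[ℂ] H'))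
    (π' : X → (Z → ℂ) → (H' →L[ℂ] H'))
    (hπ'_add : ∀ (x : X) (f g : Z → ℂ), Continuous f → HasCompactSupport f →
      Continuous g → HasCompactSupport g → π' x (f + g) = π' x f + π' x g)
    (hπ'_mul : ∀ (x : X) (f g : Z → ℂ), Continuous f → HasCompactSupport f →
      Continuous g → HasCompactSupport g → π' x (f * g) = (π' x f).comp (π' x g))
    (hπ'_star : ∀ (x : X) (f : Z → ℂ), Continuous f → HasCompactSupport f →
      π' x (fun z => (starRingEnd ℂ) (f z)) = ContinuousLinearMap.adjoint (π' x f))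
    (hπ'_equiv : ∀ (γ : Γ) (x : X) (f : Z → ℂ) (w : H'),
      π' (γ • x) f w = U' γ (π' x (fun z => f (ρ z γ⁻¹)) (U' γ⁻¹ w)))
    (hπ'_sum : ∀ (x : X) (w : H'),
      HasSum (fun γ : Γ => π' x (fun z => (c (ρ z γ) : ℂ) ^ 2) w) w)
    (V : X → (H ≃ₗᵢ[ℂ] H'))
    (hV_equiv : ∀ (γ : Γ) (x : X) (v : H),
      V (γ • x) v = U' γ (V x (U γ⁻¹ v))) :
    ∀ (ξ : X → Γ → H) (F : Finset Γ),
      (∀ (x : X) (γ : Γ), γ ∉ F → ξ x γ = 0) →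
      (∀ γ : Γ, Continuous fun x => ξ x γ) →
      ∀ (x : X) (γ : Γ),
        HasSum (fun μ : Γ =>
            π x (fun z => (c z : ℂ)) ((V x).symm
              (π' x (fun z => (c (ρ z μ) : ℂ))
                (U' μ (π' (μ⁻¹ • x) (fun z => (c z : ℂ))
                  (V (μ⁻¹ • x) (avgP π U ρ c ξ (μ⁻¹ • x) (μ⁻¹ * γ))))))))
          (mishAct π U ρ c ξ x γ) ∧
        π x (fun z => (c z : ℂ)) ((V x).symm
            (avgP π' U' ρ c
              (fun x' γ' => π' x' (fun z => (c z : ℂ)) (V x' (avgP π U ρ c ξ x' γ')))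
              x γ)) =
          mishAct π U ρ c ξ x γ := by
  intro ξ F hF _ x γ
  have hc_contℂ (μ : Γ) : Continuous fun z => (c (ρ z μ) : ℂ) :=
    Complex.continuous_ofReal.comp (hc_cont.comp (hρ_cont μ))
  have hc_suppℂ (μ : Γ) : HasCompactSupport fun z => (c (ρ z μ) : ℂ) :=
    (hc_supp.comp_rightTranslate hρ_one hρ_mul hρ_cont μ).comp_left Complex.ofReal_zero
  have hterm (μ : Γ) : π' x (fun z => (c (ρ z μ) : ℂ))
      (U' μ (π' (μ⁻¹ • x) (fun z => (c z : ℂ))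
        (V (μ⁻¹ • x) (avgP π U ρ c ξ (μ⁻¹ • x) (μ⁻¹ * γ))))) =
      π' x (fun z => (c (ρ z μ) : ℂ) ^ 2) (V x (avgP π U ρ c ξ x γ)) := by
    have hsq : (fun z => (c (ρ z μ) : ℂ) ^ 2) =
        (fun z => (c (ρ z μ) : ℂ)) * fun z => (c (ρ z μ) : ℂ) := by
      ext z
      simp [sq]
    rw [hsq, hπ'_mul x _ _ (hc_contℂ μ) (hc_suppℂ μ) (hc_contℂ μ) (hc_suppℂ μ),
      avgP_inv_smul ρ hρ_mul U π hπ_equiv]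
    simp [hπ'_equiv, hV_equiv]
  have hsum : HasSum (fun μ : Γ => π' x (fun z => (c (ρ z μ) : ℂ))
      (U' μ (π' (μ⁻¹ • x) (fun z => (c z : ℂ))
        (V (μ⁻¹ • x) (avgP π U ρ c ξ (μ⁻¹ • x) (μ⁻¹ * γ))))))
      (V x (avgP π U ρ c ξ x γ)) := by
    simpa only [hterm] using hπ'_sum x (V x (avgP π U ρ c ξ x γ))
  have hsummable : Summable fun μ : Γ =>
      π x (fun z => (c (ρ z μ) : ℂ)) (U μ (ξ (μ⁻¹ • x) (μ⁻¹ * γ))) := by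
    classical
    refine summable_of_ne_finset_zero (s := F.image fun ν => γ * ν⁻¹) fun μ hμ => ?_
    rw [hF _ _ fun h => hμ (Finset.mem_image.2 ⟨_, h, by simp⟩), map_zero, map_zero]
  have hmish : π x (fun z => (c z : ℂ)) (avgP π U ρ c ξ x γ) = mishAct π U ρ c ξ x γ := by
    unfold avgP mishAct
    rw [ContinuousLinearMap.map_tsum _ hsummable]
    refine tsum_congr fun μ => ?_
    have hmul := hπ_mul x (fun z => (c z : ℂ)) (fun z => (c (ρ z μ) : ℂ))
      (by simpa only [hρ_one] using hc_contℂ 1) (by simpa only [hρ_one] using hc_suppℂ 1)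
      (hc_contℂ μ) (hc_suppℂ μ)
    exact (DFunLike.congr_fun hmul _).symm
  constructor
  · have := (hsum.mapL ((V x).symm.toContinuousLinearEquiv : H' →L[ℂ] H)).mapL
      (π x fun z => (c z : ℂ))
    simpa [hmish] using this
  · rw [avgP, hsum.tsum_eq, LinearIsometryEquiv.symm_apply_apply, hmish]
end

section
/- With W₀ξ̂(x,γ) = π'_x(c)(V_x(𝒫ξ̂(x,γ))), one has (π'⋊Γ)(e) ∘ W₀ = W₀ = W₀ ∘ (π⋊Γ)(e) on C_c(X×Γ, H): explicitly, for every ξ̂ ∈ C_c(X×Γ, H) and (x,γ), the finite sum ∑_{μ∈Γ} π'_x(c·(μ·c))(U'_μ(W₀ξ̂(μ⁻¹x, μ⁻¹γ))) equals W₀ξ̂(x,γ), and W₀((π⋊Γ)(e)ξ̂)(x,γ) = W₀ξ̂(x,γ). Hence W₀ maps the range of the Mishchenko projection for (π,U) into the range of the Mishchenko projection for (π',U'). -/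
/-- The operator `W₀ξ̂(x,γ) = π'_x(c)(V_x(𝒫ξ̂(x,γ)))`. -/
noncomputable def W0map {Γ X Z H H' : Type*} [Group Γ] [MulAction Γ X]
    [NormedAddCommGroup H] [InnerProductSpace ℂ H]
    [NormedAddCommGroup H'] [InnerProductSpace ℂ H']
    (π' : X → (Z → ℂ) → (H' →L[ℂ] H')) (V : X → (H →L[ℂ] H'))
    (π : X → (Z → ℂ) → (H →L[ℂ] H)) (U : Γ →* (H ≃ₗᵢ[ℂ] H))
    (ρ : Z → Γ → Z) (c : Z → ℝ) (ξ : X → Γ → H) (x : X) (γ : Γ) : H' :=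
  π' x (fun z => (c z : ℂ)) (V x (avgP π U ρ c ξ x γ))

section Helpers

variable {Γ Z X H : Type*} [Group Γ] [MulAction Γ X]
  [NormedAddCommGroup H] [InnerProductSpace ℂ H]
  {ρ : Z → Γ → Z} {c : Z → ℝ} {U : Γ →* (H ≃ₗᵢ[ℂ] H)} {π : X → (Z → ℂ) → (H →L[ℂ] H)}

/-- A linear isometric equivalence commutes with unconditional sums. -/
lemma LinearIsometryEquiv.map_tsum_apply {ι : Type*} (T : H ≃ₗᵢ[ℂ] H) (f : ι → H) :
    T (∑' i, f i) = ∑' i, T (f i) :=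
  T.toContinuousLinearEquiv.map_tsum

/-- A translate of a compactly supported function is compactly supported. -/
lemma hasCompactSupport_translate [TopologicalSpace Z] {f : Z → ℂ}
    (hρ_one : ∀ z, ρ z 1 = z) (hρ_mul : ∀ (z : Z) (γ μ : Γ), ρ (ρ z γ) μ = ρ z (γ * μ))
    (hρ_cont : ∀ γ : Γ, Continuous fun z => ρ z γ) (hf : HasCompactSupport f) (μ : Γ) :
    HasCompactSupport fun z => f (ρ z μ) :=
  hf.comp_homeomorph
    { toFun := fun z => ρ z μ
      invFun := fun z => ρ z μ⁻¹
      left_inv := fun z => by simp [hρ_mul, hρ_one]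
      right_inv := fun z => by simp [hρ_mul, hρ_one]
      continuous_toFun := hρ_cont μ
      continuous_invFun := hρ_cont μ⁻¹ }

/-- Equivariance of `π` as a commutation rule: `U_μ ∘ π_{μ⁻¹x}(f) = π_x(μ·f) ∘ U_μ`. -/
lemma unitary_apply_rep
    (hρ_one : ∀ z, ρ z 1 = z) (hρ_mul : ∀ (z : Z) (γ μ : Γ), ρ (ρ z γ) μ = ρ z (γ * μ))
    (hπ_equiv : ∀ (γ : Γ) (x : X) (f : Z → ℂ) (v : H),
      π (γ • x) f v = U γ (π x (fun z => f (ρ z γ⁻¹)) (U γ⁻¹ v)))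
    (μ : Γ) (x : X) (f : Z → ℂ) (v : H) :
    U μ (π (μ⁻¹ • x) f v) = π x (fun z => f (ρ z μ)) (U μ v) := by
  have h := hπ_equiv μ (μ⁻¹ • x) (fun z => f (ρ z μ)) (U μ v)
  simpa [hρ_mul, hρ_one] using h.symm

/-- The averaging map takes values in invariant functions. -/
lemma unitary_apply_avgP
    (hρ_one : ∀ z, ρ z 1 = z) (hρ_mul : ∀ (z : Z) (γ μ : Γ), ρ (ρ z γ) μ = ρ z (γ * μ))
    (hπ_equiv : ∀ (γ : Γ) (x : X) (f : Z → ℂ) (v : H),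
      π (γ • x) f v = U γ (π x (fun z => f (ρ z γ⁻¹)) (U γ⁻¹ v)))
    (ξ : X → Γ → H) (μ : Γ) (x : X) (γ : Γ) :
    U μ (avgP π U ρ c ξ (μ⁻¹ • x) (μ⁻¹ * γ)) = avgP π U ρ c ξ x γ := by
  unfold avgP
  rw [LinearIsometryEquiv.map_tsum_apply (U μ), ← (Equiv.mulLeft μ).tsum_eq
    (fun ν : Γ => π x (fun z => (c (ρ z ν) : ℂ)) (U ν (ξ (ν⁻¹ • x) (ν⁻¹ * γ))))]
  refine tsum_congr fun ν => ?_
  rw [unitary_apply_rep hρ_one hρ_mul hπ_equiv]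
  simp [hρ_mul, mul_smul, mul_assoc]

/-- The averaging map absorbs the Mishchenko projection. -/
lemma avgP_mishAct [TopologicalSpace Z]
    (hρ_one : ∀ z, ρ z 1 = z) (hρ_mul : ∀ (z : Z) (γ μ : Γ), ρ (ρ z γ) μ = ρ z (γ * μ))
    (hρ_cont : ∀ γ : Γ, Continuous fun z => ρ z γ)
    (hc_cont : Continuous fun z => (c z : ℂ)) (hc_supp : HasCompactSupport fun z => (c z : ℂ))
    (hπ_mul : ∀ (x : X) (f g : Z → ℂ), Continuous f → HasCompactSupport f →
      Continuous g → HasCompactSupport g → π x (f * g) = (π x f).comp (π x g))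
    (hπ_equiv : ∀ (γ : Γ) (x : X) (f : Z → ℂ) (v : H),
      π (γ • x) f v = U γ (π x (fun z => f (ρ z γ⁻¹)) (U γ⁻¹ v)))
    (hπ_sum : ∀ (x : X) (v : H),
      HasSum (fun γ : Γ => π x (fun z => (c (ρ z γ) : ℂ) ^ 2) v) v)
    {ξ : X → Γ → H} {F : Finset Γ} (hξ : ∀ (x : X) (γ : Γ), γ ∉ F → ξ x γ = 0)
    (x : X) (γ : Γ) :
    avgP π U ρ c (mishAct π U ρ c ξ) x γ = avgP π U ρ c ξ x γ := by
  classical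
  let T : Finset Γ := F.image fun φ => γ * φ⁻¹
  have hT : ∀ ν ∉ T, ξ (ν⁻¹ • x) (ν⁻¹ * γ) = 0 := fun ν hν =>
    hξ _ _ fun hF => hν (Finset.mem_image.2 ⟨_, hF, by simp⟩)
  have hcont (μ : Γ) : Continuous fun z => (c (ρ z μ) : ℂ) := hc_cont.comp (hρ_cont μ)
  have hsupp (μ : Γ) : HasCompactSupport fun z => (c (ρ z μ) : ℂ) :=
    hasCompactSupport_translate hρ_one hρ_mul hρ_cont hc_supp μ
  have hterm (μ : Γ) :
      π x (fun z => (c (ρ z μ) : ℂ)) (U μ (mishAct π U ρ c ξ (μ⁻¹ • x) (μ⁻¹ * γ))) =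
        ∑ ν ∈ T, π x (fun z => (c (ρ z μ) : ℂ) ^ 2)
          (π x (fun z => (c (ρ z ν) : ℂ)) (U ν (ξ (ν⁻¹ • x) (ν⁻¹ * γ)))) := by
    have hinner : U μ (mishAct π U ρ c ξ (μ⁻¹ • x) (μ⁻¹ * γ)) =
        ∑ ν ∈ T, π x (fun z => (c (ρ z μ) : ℂ) * (c (ρ z ν) : ℂ))
          (U ν (ξ (ν⁻¹ • x) (ν⁻¹ * γ))) := by
      unfold mishAct
      rw [← tsum_eq_sum (s := T) (L := .unconditional Γ)
          (f := fun ν => π x (fun z => (c (ρ z μ) : ℂ) * (c (ρ z ν) : ℂ))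
            (U ν (ξ (ν⁻¹ • x) (ν⁻¹ * γ)))) (fun ν hν => by simp [hT ν hν]),
        LinearIsometryEquiv.map_tsum_apply (U μ), ← (Equiv.mulLeft μ).tsum_eq
          (fun ν : Γ => π x (fun z => (c (ρ z μ) : ℂ) * (c (ρ z ν) : ℂ))
            (U ν (ξ (ν⁻¹ • x) (ν⁻¹ * γ))))]
      refine tsum_congr fun ν => ?_
      rw [unitary_apply_rep hρ_one hρ_mul hπ_equiv]
      simp [hρ_mul, mul_smul, mul_assoc]
    rw [hinner, map_sum]
    refine Finset.sum_congr rfl fun ν _ => ?_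
    have hmul := hπ_mul x _ _ (hcont μ) (hsupp μ) (hcont ν) (hsupp ν)
    have hsq := hπ_mul x _ _ (hcont μ) (hsupp μ) (hcont μ) (hsupp μ)
    simp only [Pi.mul_def] at hmul hsq
    simp only [hmul, pow_two, hsq, ContinuousLinearMap.comp_apply]
  unfold avgP
  simp only [hterm]
  rw [(hasSum_sum fun ν _ => hπ_sum x _).tsum_eq]
  exact (tsum_eq_sum fun ν hν => by simp [hT ν hν]).symm

end Helpers

/-- `(π'⋊Γ)(e) ∘ W₀ = W₀ = W₀ ∘ (π⋊Γ)(e)` on `C_c(X×Γ, H)`: the finite sum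
`∑_μ π'_x(c·(μ·c))(U'_μ(W₀ξ̂(μ⁻¹x, μ⁻¹γ)))` equals `W₀ξ̂(x,γ)`, and
`W₀((π⋊Γ)(e)ξ̂)(x,γ) = W₀ξ̂(x,γ)`; thus `W₀` maps the range of the Mishchenko
projection for `(π,U)` into that for `(π',U')`. -/
theorem W0_intertwines_mishchenko_projections
    {Γ : Type*} [Group Γ]
    {Z : Type*} [TopologicalSpace Z] [LocallyCompactSpace Z] [T2Space Z]
    {X : Type*} [TopologicalSpace X] [CompactSpace X] [T2Space X] [MulAction Γ X]
    {H : Type*} [NormedAddCommGroup H] [InnerProductSpace ℂ H] [CompleteSpace H]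
    {H' : Type*} [NormedAddCommGroup H'] [InnerProductSpace ℂ H'] [CompleteSpace H']
    (ρ : Z → Γ → Z)
    (hρ_one : ∀ z, ρ z 1 = z)
    (hρ_mul : ∀ (z : Z) (γ μ : Γ), ρ (ρ z γ) μ = ρ z (γ * μ))
    (hρ_cont : ∀ γ : Γ, Continuous fun z => ρ z γ)
    (hρ_proper : ∀ K L : Set Z, IsCompact K → IsCompact L →
      {γ : Γ | ∃ z ∈ K, ρ z γ ∈ L}.Finite)
    (hX_cont : ∀ γ : Γ, Continuous fun x : X => γ • x)
    (c : Z → ℝ) (hc_cont : Continuous c) (hc_supp : HasCompactSupport c)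
    (hc_mem : ∀ z, c z ∈ Set.Icc (0 : ℝ) 1)
    (hc_sum : ∀ z, HasSum (fun γ : Γ => c (ρ z γ) ^ 2) 1)
    (U : Γ →* (H ≃ₗᵢ[ℂ] H))
    (π : X → (Z → ℂ) → (H →L[ℂ] H))
    (hπ_add : ∀ (x : X) (f g : Z → ℂ), Continuous f → HasCompactSupport f →
      Continuous g → HasCompactSupport g → π x (f + g) = π x f + π x g)
    (hπ_mul : ∀ (x : X) (f g : Z → ℂ), Continuous f → HasCompactSupport f →
      Continuous g → HasCompactSupport g → π x (f * g) = (π x f).comp (π x g))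
    (hπ_star : ∀ (x : X) (f : Z → ℂ), Continuous f → HasCompactSupport f →
      π x (fun z => (starRingEnd ℂ) (f z)) = ContinuousLinearMap.adjoint (π x f))
    (hπ_equiv : ∀ (γ : Γ) (x : X) (f : Z → ℂ) (v : H),
      π (γ • x) f v = U γ (π x (fun z => f (ρ z γ⁻¹)) (U γ⁻¹ v)))
    (hπ_sum : ∀ (x : X) (v : H),
      HasSum (fun γ : Γ => π x (fun z => (c (ρ z γ) : ℂ) ^ 2) v) v)
    (U' : Γ →* (H' ≃ₗᵢ[ℂ] H'))
    (π' : X → (Z → ℂ) → (H' →L[ℂ] H'))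
    (hπ'_add : ∀ (x : X) (f g : Z → ℂ), Continuous f → HasCompactSupport f →
      Continuous g → HasCompactSupport g → π' x (f + g) = π' x f + π' x g)
    (hπ'_mul : ∀ (x : X) (f g : Z → ℂ), Continuous f → HasCompactSupport f →
      Continuous g → HasCompactSupport g → π' x (f * g) = (π' x f).comp (π' x g))
    (hπ'_star : ∀ (x : X) (f : Z → ℂ), Continuous f → HasCompactSupport f →
      π' x (fun z => (starRingEnd ℂ) (f z)) = ContinuousLinearMap.adjoint (π' x f))
    (hπ'_equiv : ∀ (γ : Γ) (x : X) (f : Z → ℂ) (w : H'),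
      π' (γ • x) f w = U' γ (π' x (fun z => f (ρ z γ⁻¹)) (U' γ⁻¹ w)))
    (hπ'_sum : ∀ (x : X) (w : H'),
      HasSum (fun γ : Γ => π' x (fun z => (c (ρ z γ) : ℂ) ^ 2) w) w)
    (V : X → (H →L[ℂ] H'))
    (hV_equiv : ∀ (γ : Γ) (x : X) (v : H),
      V (γ • x) v = U' γ (V x (U γ⁻¹ v))) :
    ∀ (ξ : X → Γ → H) (F : Finset Γ),
      (∀ (x : X) (γ : Γ), γ ∉ F → ξ x γ = 0) →
      (∀ γ : Γ, Continuous fun x => ξ x γ) →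
      ∀ (x : X) (γ : Γ),
        HasSum (fun μ : Γ =>
            π' x (fun z => (c z : ℂ) * (c (ρ z μ) : ℂ))
              (U' μ (W0map π' V π U ρ c ξ (μ⁻¹ • x) (μ⁻¹ * γ))))
          (W0map π' V π U ρ c ξ x γ) ∧
        W0map π' V π U ρ c (mishAct π U ρ c ξ) x γ = W0map π' V π U ρ c ξ x γ := by
  intro ξ F hξ _ x γ
  have hcC : Continuous fun z => (c z : ℂ) := Complex.continuous_ofReal.comp hc_cont
  have hcS : HasCompactSupport fun z => (c z : ℂ) :=
    hc_supp.comp_left (g := fun t : ℝ => (t : ℂ)) Complex.ofReal_zero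
  refine ⟨?_, ?_⟩
  · have hsum := (hπ'_sum x (V x (avgP π U ρ c ξ x γ))).mapL (π' x fun z => (c z : ℂ))
    refine hsum.congr_fun fun μ => ?_
    have hcCμ : Continuous fun z => (c (ρ z μ) : ℂ) := hcC.comp (hρ_cont μ)
    have hcSμ : HasCompactSupport fun z => (c (ρ z μ) : ℂ) :=
      hasCompactSupport_translate hρ_one hρ_mul hρ_cont hcS μ
    have hmul := hπ'_mul x _ _ hcC hcS hcCμ hcSμ
    have hsq := hπ'_mul x _ _ hcCμ hcSμ hcCμ hcSμ
    simp only [Pi.mul_def] at hmul hsq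
    have hV := hV_equiv μ (μ⁻¹ • x) (U μ (avgP π U ρ c ξ (μ⁻¹ • x) (μ⁻¹ * γ)))
    have hU (v : H) : U μ⁻¹ (U μ v) = v := by simp
    rw [smul_inv_smul, hU, unitary_apply_avgP hρ_one hρ_mul hπ_equiv] at hV
    rw [W0map, unitary_apply_rep hρ_one hρ_mul hπ'_equiv, ← hV]
    simp only [hmul, pow_two, hsq, ContinuousLinearMap.comp_apply]
  · rw [W0map, W0map, avgP_mishAct hρ_one hρ_mul hρ_cont hcC hcS hπ_mul hπ_equiv hπ_sum hξ]
end

section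
/- Assume H ≠ {0}, assume each π_x is nondegenerate (the linear span of {π_x(g)v : g a compactly supported continuous function on Z, v ∈ H} is dense in H), and assume that for every compactly supported continuous g on Z and every v ∈ H the map x ↦ π_x(g)v is norm-continuous from X to H. Then there exist n ∈ ℕ, compactly supported continuous functions ψ₁, …, ψₙ on Z, continuous functions u₁, …, uₙ : X → ℝ, and vectors ζ₁, …, ζₙ ∈ H such that ‖∑_{i=1}^n u_i(x)·π_x(ψ_i)(ζ_i)‖ ≥ 3/4 for every x ∈ X. (This compactness/partition-of-unity argument produces, after normalization, a section φ ∈ π(C_c(Z×X))(C(X)⊗H) with ‖φ(x)‖ = 1 for all x, the key step in proving that the Connes–Skandalis module is full.) -/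
/-- A `C(X, ℝ)`-submodule of `C(X, E)` that can be approximated at each point to within `ε` of `v`
contains a section that is uniformly within `ε` of `v`. -/
theorem Submodule.exists_mem_forall_dist_lt_of_forall_exists
    {X : Type*} [TopologicalSpace X] [CompactSpace X] [T2Space X]
    {E : Type*} [NormedAddCommGroup E] [NormedSpace ℝ E]
    (M : Submodule C(X, ℝ) C(X, E)) (v : E) (ε : ℝ)
    (h : ∀ x, ∃ s ∈ M, dist (s x) v < ε) :
    ∃ s ∈ M, ∀ x, dist (s x) v < ε := by
  choose s hsM hs using h
  have hopen (y : X) : IsOpen {x | dist (s y x) v < ε} :=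
    isOpen_lt (by fun_prop) continuous_const
  obtain ⟨t, ht⟩ := CompactSpace.elim_nhds_subcover (fun y => {x | dist (s y x) v < ε})
    fun y => (hopen y).mem_nhds (hs y)
  obtain ⟨f, hf⟩ := PartitionOfUnity.exists_isSubordinate (s := Set.univ) isClosed_univ
    (fun y : t => {x | dist (s y x) v < ε}) (fun y => hopen y) (fun x _ => by
      have hx : x ∈ ⋃ y ∈ t, {x | dist (s y x) v < ε} := ht ▸ Set.mem_univ x
      simpa using hx)
  refine ⟨∑ y : t, f y • s y, M.sum_mem fun y _ => M.smul_mem _ (hsM y), fun x => ?_⟩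
  have hx : ∑ᶠ y : t, f y x • s y x ∈ Metric.ball v ε :=
    f.finsum_smul_mem_convex (Set.mem_univ x)
      (fun y hy => hf y (subset_closure hy)) (convex_ball v ε)
  simpa [finsum_eq_sum_of_fintype] using hx

/-- Partition-of-unity argument for fullness of the Connes–Skandalis module:
if `H ≠ {0}`, each `π_x` is nondegenerate, and `x ↦ π_x(g)v` is norm-continuous
for each compactly supported continuous `g` and `v ∈ H`, then there are
finitely many compactly supported continuous `ψ_i` on `Z`, continuous
`u_i : X → ℝ` and vectors `ζ_i ∈ H` with `‖∑ᵢ u_i(x)·π_x(ψ_i)(ζ_i)‖ ≥ 3/4`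
for every `x ∈ X`. -/
theorem exists_uniformly_nonvanishing_section
    {Z : Type*} [TopologicalSpace Z] [LocallyCompactSpace Z] [T2Space Z]
    {X : Type*} [TopologicalSpace X] [CompactSpace X] [T2Space X]
    {H : Type*} [NormedAddCommGroup H] [InnerProductSpace ℂ H] [CompleteSpace H]
    [Nontrivial H]
    (π : X → (Z → ℂ) → (H →L[ℂ] H))
    (hπ_add : ∀ (x : X) (f g : Z → ℂ), Continuous f → HasCompactSupport f →
      Continuous g → HasCompactSupport g → π x (f + g) = π x f + π x g)
    (hπ_smul : ∀ (x : X) (a : ℂ) (f : Z → ℂ), Continuous f → HasCompactSupport f →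
      π x (a • f) = a • π x f)
    (hπ_mul : ∀ (x : X) (f g : Z → ℂ), Continuous f → HasCompactSupport f →
      Continuous g → HasCompactSupport g → π x (f * g) = (π x f).comp (π x g))
    (hπ_star : ∀ (x : X) (f : Z → ℂ), Continuous f → HasCompactSupport f →
      π x (fun z => (starRingEnd ℂ) (f z)) = ContinuousLinearMap.adjoint (π x f))
    (hπ_nondeg : ∀ x : X, Dense
      (Submodule.span ℂ {w : H | ∃ g : Z → ℂ,
        (Continuous g ∧ HasCompactSupport g) ∧ ∃ v : H, w = π x g v} : Set H))
    (hπ_cont : ∀ g : Z → ℂ, Continuous g → HasCompactSupport g →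
      ∀ v : H, Continuous fun x : X => π x g v) :
    ∃ (n : ℕ) (ψ : Fin n → Z → ℂ) (u : Fin n → X → ℝ) (ζ : Fin n → H),
      (∀ i, Continuous (ψ i)) ∧ (∀ i, HasCompactSupport (ψ i)) ∧
      (∀ i, Continuous (u i)) ∧
      ∀ x : X, (3 / 4 : ℝ) ≤ ‖∑ i, (u i x : ℂ) • π x (ψ i) (ζ i)‖ := by
  let sec (g : {g : Z → ℂ // Continuous g ∧ HasCompactSupport g}) (w : H) : C(X, H) :=
    ⟨fun x => π x g w, hπ_cont g g.2.1 g.2.2 w⟩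
  let S : Set C(X, H) := {s | ∃ g w, sec g w = s}
  obtain ⟨v, hv⟩ := exists_norm_eq H zero_le_one
  have hspan (x : X) (w : H) (hw : w ∈ Submodule.span ℂ {w : H | ∃ g : Z → ℂ,
      (Continuous g ∧ HasCompactSupport g) ∧ ∃ v : H, w = π x g v}) :
      ∃ s ∈ Submodule.span C(X, ℝ) S, s x = w := by
    induction hw using Submodule.closure_induction with
    | zero => exact ⟨0, zero_mem _, rfl⟩
    | add a b _ _ ha hb =>
      obtain ⟨s, hs, rfl⟩ := ha
      obtain ⟨t, ht, rfl⟩ := hb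
      exact ⟨s + t, add_mem hs ht, rfl⟩
    | smul_mem c a ha =>
      obtain ⟨g, hg, w, rfl⟩ := ha
      exact ⟨sec ⟨g, hg⟩ (c • w), Submodule.subset_span ⟨_, _, rfl⟩, map_smul (π x g) c w⟩
  obtain ⟨s, hsM, hs⟩ := (Submodule.span C(X, ℝ) S).exists_mem_forall_dist_lt_of_forall_exists
    v (1 / 4) fun x => by
      obtain ⟨w, hw, hvw⟩ := (hπ_nondeg x).exists_dist_lt v (show (0 : ℝ) < 1 / 4 by norm_num)
      obtain ⟨s, hs, rfl⟩ := hspan x w hw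
      exact ⟨s, hs, by rwa [dist_comm]⟩
  obtain ⟨n, u, σ, rfl⟩ := Submodule.mem_span_set'.mp hsM
  choose ψ ζ hσ using fun i => (σ i).2
  refine ⟨n, fun i => ψ i, fun i => u i, ζ, fun i => (ψ i).2.1, fun i => (ψ i).2.2,
    fun i => (u i).continuous, fun x => ?_⟩
  have hx : (∑ i, u i • (σ i : C(X, H))) x = ∑ i, (u i x : ℂ) • π x (ψ i) (ζ i) := by
    simp [← hσ, sec]
  have hdist := hs x
  rw [hx, dist_eq_norm] at hdist
  have hrev := norm_sub_norm_le v (∑ i, (u i x : ℂ) • π x (ψ i) (ζ i))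
  rw [hv, norm_sub_rev] at hrev
  linarith
end
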